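/- Let S = F₂[w, x, y, z] / ⟨w² − 1, x² − 1, y² − 1, z² − 1⟩, a 16-dimensional commutative F₂-algebra, and let F = 1 + wx, G = 1 + xy, H = 1 + yz, I = 1 + wz in S. Let d₂ : S⁶ → S⁴ and d₃ : S⁴ → S⁶ be the S-linear maps given by multiplication by the block matrices D₂ = [[G,H,I,0,0,0],[F,0,0,H,I,0],[0,F,0,G,0,I],[0,0,F,0,G,H]] and D₃ = [[H,I,0,0],[G,0,I,0],[0,G,H,0],[F,0,0,I],[0,F,0,H],[0,0,F,G]], viewed as F₂-linear maps between F₂-vector spaces of dimensions 96 and 64. Then d₂ ∘ d₃ = 0 and dim_{F₂} ker(d₂) − dim_{F₂} im(d₃) = 12; i.e., this multivariate multicycle code encodes k = 12 logical qubits in n = 96 physical qubits. -/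

import Mathlib

open MvPolynomial Matrix

set_option synthInstance.maxHeartbeats 1000000
set_option maxHeartbeats 2000000

noncomputable section

/-- The ideal `⟨w²−1, x²−1, y²−1, z²−1⟩` in `𝔽₂[w,x,y,z]`. -/
def relIdeal : Ideal (MvPolynomial (Fin 4) (ZMod 2)) :=
  Ideal.span {X 0 ^ 2 - 1, X 1 ^ 2 - 1, X 2 ^ 2 - 1, X 3 ^ 2 - 1}

/-- The 16-dimensional commutative `𝔽₂`-algebra `S = 𝔽₂[w,x,y,z]/⟨w²−1, x²−1, y²−1, z²−1⟩`. -/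
abbrev Squot : Type := MvPolynomial (Fin 4) (ZMod 2) ⧸ relIdeal

def wq : Squot := Ideal.Quotient.mk relIdeal (X 0)
def xq : Squot := Ideal.Quotient.mk relIdeal (X 1)
def yq : Squot := Ideal.Quotient.mk relIdeal (X 2)
def zq : Squot := Ideal.Quotient.mk relIdeal (X 3)

/-- `F = 1 + wx`. -/ def Fq : Squot := 1 + wq * xq
/-- `G = 1 + xy`. -/ def Gq : Squot := 1 + xq * yq
/-- `H = 1 + yz`. -/ def Hq : Squot := 1 + yq * zq
/-- `I = 1 + wz`. -/ def Iq : Squot := 1 + wq * zq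

/-- Second Koszul boundary map `D₂`. -/
def D2 : Matrix (Fin 4) (Fin 6) Squot :=
  !![Gq, Hq, Iq, 0, 0, 0;
     Fq, 0, 0, Hq, Iq, 0;
     0, Fq, 0, Gq, 0, Iq;
     0, 0, Fq, 0, Gq, Hq]

/-- Third Koszul boundary map `D₃`. -/
def D3 : Matrix (Fin 6) (Fin 4) Squot :=
  !![Hq, Iq, 0, 0;
     Gq, 0, Iq, 0;
     0, Gq, Hq, 0;
     Fq, 0, 0, Iq;
     0, Fq, 0, Hq;
     0, 0, Fq, Gq]

/-!
Since `wx = xy · yz · wz`, the element `F` lies in the ideal `⟨G, H, I⟩`, so multiplication by `F`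
is null-homotopic on the Koszul complex `K(G, H, I)`. As `K(F, G, H, I)` is the cone of this map,
`rank dₚ(F, G, H, I) = rank dₚ₋₁(G, H, I) + rank dₚ(G, H, I)`.

The elements `G, H, I` square to zero, and the derivations `y∂ₓ`, `z∂_y`, `z∂_w` of `S` are
triangularly dual to them. If `f² = 0` and `δ f = 1`, then `fδ + δf = 1`, so `f` halves the
dimension of every subspace invariant under `f` and `δ`. Adding the elements one at a time gives
`2ⁿ rank dₚ(f₁, …, fₙ) = (2ⁿ - 1) (n-1 choose p-1) dim S`. This yields ranks `14, 28, 14` for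
`K(G, H, I)`, hence `rank D₂ = rank D₃ = 42` and `96 - 42 - 42 = 12`.

The same formula for `1 + w, 1 + x, 1 + y, 1 + z` and `p = 1` says that the augmentation ideal,
which has codimension one, has dimension `(15/16) dim S`. Therefore `dim S = 16`.
-/

section LinearAlgebra

variable {k B C E : Type*} [Field k] [AddCommGroup B] [Module k B] [AddCommGroup C] [Module k C]
  [AddCommGroup E] [Module k E]

lemma finrank_range_equiv_comp_comp_equiv {B' E' : Type*} [AddCommGroup B'] [Module k B']
    [AddCommGroup E'] [Module k E'] (e : E ≃ₗ[k] E') (φ : B →ₗ[k] E) (e' : B' ≃ₗ[k] B) :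
    Module.finrank k (LinearMap.range (e.toLinearMap ∘ₗ φ ∘ₗ e'.toLinearMap)) =
      Module.finrank k (LinearMap.range φ) := by
  rw [LinearMap.range_comp, LinearEquiv.range_comp]
  exact e.finrank_map_eq _

lemma finrank_map_add_finrank_inf_ker (φ : C →ₗ[k] E) (W : Submodule k C)
    [FiniteDimensional k W] :
    Module.finrank k (W.map φ) + Module.finrank k (W ⊓ LinearMap.ker φ : Submodule k C) =
      Module.finrank k W := by
  rw [← LinearMap.range_domRestrict, ← LinearMap.finrank_range_add_finrank_ker (φ.domRestrict W),
    LinearMap.ker_domRestrict, ← Submodule.map_comap_subtype,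
    Submodule.finrank_map_subtype_eq]

lemma finrank_range_mappingCone [FiniteDimensional k C] [FiniteDimensional k E]
    (α : C →ₗ[k] E) (f : Module.End k C) (β : B →ₗ[k] C) :
    Module.finrank k (LinearMap.range ((α ∘ₗ LinearMap.fst k C B).prod (f.coprod β))) =
      Module.finrank k (LinearMap.range α) +
        Module.finrank k (LinearMap.range β ⊔ (LinearMap.ker α).map f : Submodule k C) := by
  set Φ := (α ∘ₗ LinearMap.fst k C B).prod (f.coprod β) with hΦ
  have range_fst : (LinearMap.range Φ).map (LinearMap.fst k E C) = LinearMap.range α := by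
    rw [← LinearMap.range_comp, hΦ, LinearMap.fst_prod,
      LinearMap.range_comp_of_range_eq_top _ (LinearMap.range_eq_top.2 LinearMap.fst_surjective)]
  have ker_fst : LinearMap.range Φ ⊓ LinearMap.ker (LinearMap.fst k E C) =
      (LinearMap.range β ⊔ (LinearMap.ker α).map f).map (LinearMap.inr k E C) := by
    ext ⟨e, c⟩
    simp only [Submodule.mem_inf, LinearMap.mem_range, LinearMap.mem_ker, Submodule.mem_map,
      Submodule.mem_sup, LinearMap.inr_apply, Prod.mk.injEq, LinearMap.fst_apply]
    constructor
    · rintro ⟨⟨⟨c', b⟩, h⟩, rfl⟩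
      obtain ⟨h₁, h₂⟩ := Prod.mk.inj h
      exact ⟨c, ⟨β b, ⟨b, rfl⟩, f c', ⟨c', h₁, rfl⟩, (add_comm _ _).trans h₂⟩, rfl, rfl⟩
    · rintro ⟨_, ⟨_, ⟨b, rfl⟩, _, ⟨c', hc', rfl⟩, rfl⟩, rfl, rfl⟩
      exact ⟨⟨(c', b), Prod.ext hc' (add_comm _ _)⟩, rfl⟩
  rw [← finrank_map_add_finrank_inf_ker (LinearMap.fst k E C), range_fst, ker_fst]
  congr 1
  exact (Submodule.equivMapOfInjective _ LinearMap.inr_injective _).finrank_eq.symm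

/-- `δ` is a contracting homotopy for the square-zero operator `f`: the two-periodic complex
`⋯ → C → C → ⋯` with differential `f` is contractible via `δ`. -/
structure IsContraction (f δ : Module.End k C) : Prop where
  mul_self : f * f = 0
  homotopy : f * δ + δ * f = 1

namespace IsContraction

variable {f δ : Module.End k C} {W : Submodule k C}

lemma map_eq_inf_ker (h : IsContraction f δ) (hf : W ∈ f.invtSubmodule)
    (hδ : W ∈ δ.invtSubmodule) : W.map f = W ⊓ LinearMap.ker f := by
  apply le_antisymm
  · rintro _ ⟨v, hv, rfl⟩
    exact ⟨hf hv, LinearMap.congr_fun h.mul_self v⟩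
  · rintro v ⟨hv, hfv : f v = 0⟩
    have hom : f (δ v) + δ (f v) = v := LinearMap.congr_fun h.homotopy v
    rw [hfv, map_zero, add_zero] at hom
    exact ⟨δ v, hδ hv, hom⟩

lemma finrank_eq_two_mul_finrank_map [FiniteDimensional k C] (h : IsContraction f δ)
    (hf : W ∈ f.invtSubmodule) (hδ : W ∈ δ.invtSubmodule) :
    Module.finrank k W = 2 * Module.finrank k (W.map f) := by
  rw [← finrank_map_add_finrank_inf_ker f W, ← h.map_eq_inf_ker hf hδ, two_mul]

lemma two_mul_finrank_range_mappingCone [FiniteDimensional k C] [FiniteDimensional k E]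
    (h : IsContraction f δ) {α : C →ₗ[k] E} {β : B →ₗ[k] C} (hαβ : α ∘ₗ β = 0)
    (hfα : LinearMap.ker α ∈ f.invtSubmodule) (hδα : LinearMap.ker α ∈ δ.invtSubmodule)
    (hfβ : LinearMap.range β ∈ f.invtSubmodule) (hδβ : LinearMap.range β ∈ δ.invtSubmodule) :
    2 * Module.finrank k (LinearMap.range ((α ∘ₗ LinearMap.fst k C B).prod (f.coprod β))) =
      Module.finrank k (LinearMap.range α) + Module.finrank k (LinearMap.range β) +
        Module.finrank k C := by
  have range_le_ker : LinearMap.range β ≤ LinearMap.ker α := LinearMap.range_le_ker_iff.2 hαβ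
  have range_inf_map : LinearMap.range β ⊓ (LinearMap.ker α).map f = (LinearMap.range β).map f := by
    rw [h.map_eq_inf_ker hfα hδα, h.map_eq_inf_ker hfβ hδβ, ← inf_assoc,
      inf_eq_left.2 range_le_ker]
  have dim_sup := Submodule.finrank_sup_add_finrank_inf_eq (LinearMap.range β)
    ((LinearMap.ker α).map f)
  rw [range_inf_map] at dim_sup
  have dim_range := h.finrank_eq_two_mul_finrank_map hfβ hδβ
  have dim_ker := h.finrank_eq_two_mul_finrank_map hfα hδα
  have rank_nullity := α.finrank_range_add_finrank_ker
  rw [finrank_range_mappingCone]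
  lia

end IsContraction

end LinearAlgebra

section MatrixRank

variable (k : Type*) {S : Type*} [Field k] [CommRing S] [Algebra k S]
  {l m n : Type*} [Fintype n]

/-- The rank over the base field `k` of a matrix with entries in a `k`-algebra. -/
def rankOver (A : Matrix m n S) : ℕ :=
  Module.finrank k (LinearMap.range (A.mulVecLin.restrictScalars k))

lemma rankOver_reindex {m' n' : Type*} [Fintype n'] (e : m ≃ m') (e' : n ≃ n')
    (A : Matrix m n S) : rankOver k (A.reindex e e') = rankOver k A := by
  rw [rankOver, Matrix.mulVecLin_reindex]
  exact finrank_range_equiv_comp_comp_equiv (LinearEquiv.funCongrLeft k S e.symm)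
    (A.mulVecLin.restrictScalars k) (LinearEquiv.funCongrLeft k S e')

lemma rankOver_zero : rankOver k (0 : Matrix m n S) = 0 := by
  rw [rankOver, mulVecLin_zero, LinearMap.restrictScalars_zero, LinearMap.range_zero,
    finrank_bot]

lemma rankOver_of_unique [Unique m] (A : Matrix m n S) :
    rankOver k A = Module.finrank k ((Ideal.span (Set.range (A default))).restrictScalars k) := by
  have map_range : (LinearMap.range (A.mulVecLin.restrictScalars k)).map
      (LinearEquiv.funUnique m k S).toLinearMap =
        (Ideal.span (Set.range (A default))).restrictScalars k := by
    ext s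
    simp only [Submodule.mem_map, LinearMap.mem_range, exists_exists_eq_and,
      Submodule.restrictScalars_mem, Ideal.mem_span_range_iff_exists_fun]
    refine exists_congr fun c ↦ ?_
    change A default ⬝ᵥ c = s ↔ c ⬝ᵥ A default = s
    rw [dotProduct_comm]
  rw [rankOver, ← map_range, LinearEquiv.finrank_map_eq]

variable {k} in
lemma derivation_mulVec (δ : Derivation k S S) {A : Matrix m n S} (hδA : ∀ i j, δ (A i j) = 0)
    (v : n → S) : δ ∘ (A *ᵥ v) = A *ᵥ (δ ∘ v) := by
  ext i
  simp [mulVec, dotProduct, hδA]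

variable {k} in
lemma isContraction_of_derivation (δ : Derivation k S S) {f : S} (hf : f * f = 0)
    (hδf : δ f = 1) (ι : Type*) :
    IsContraction (Algebra.lsmul k k (ι → S) f) (δ.toLinearMap.compLeft ι) where
  mul_self := by rw [← map_mul, hf, map_zero]
  homotopy := by
    have two_mul_f : 2 * f = 0 := by simpa [hδf, two_mul] using congrArg δ hf
    ext v i
    have leibniz : δ (f * v i) = f * δ (v i) + v i := by simp [hδf]
    change f * δ (v i) + δ (f * v i) = v i
    linear_combination leibniz + δ (v i) * two_mul_f

variable [Fintype m] [DecidableEq m]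

/-- The boundary matrix of the mapping cone of multiplication by `f` on a complex with consecutive
boundary matrices `A` and `B`. The sign of the cone is omitted, so it is a complex only in
characteristic two. -/
def coneMatrix (A : Matrix l m S) (f : S) (B : Matrix m n S) : Matrix (l ⊕ m) (m ⊕ n) S :=
  fromBlocks A 0 (diagonal fun _ ↦ f) B

lemma rankOver_coneMatrix_eq_finrank_range_mappingCone (A : Matrix l m S) (f : S)
    (B : Matrix m n S) :
    rankOver k (coneMatrix A f B) = Module.finrank k (LinearMap.range
      ((A.mulVecLin.restrictScalars k ∘ₗ LinearMap.fst k (m → S) (n → S)).prod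
        ((Algebra.lsmul k k (m → S) f).coprod (B.mulVecLin.restrictScalars k)))) := by
  have mulVecLin_coneMatrix : (coneMatrix A f B).mulVecLin.restrictScalars k =
      (LinearEquiv.sumArrowLequivProdArrow l m k S).symm.toLinearMap ∘ₗ
        ((A.mulVecLin.restrictScalars k ∘ₗ LinearMap.fst k (m → S) (n → S)).prod
          ((Algebra.lsmul k k (m → S) f).coprod (B.mulVecLin.restrictScalars k))) ∘ₗ
        (LinearEquiv.sumArrowLequivProdArrow m n k S).toLinearMap := by
    refine LinearMap.ext fun v ↦ (fromBlocks_mulVec _ _ _ _ v).trans ?_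
    ext (i | i)
    · exact congrFun (congrArg (A *ᵥ v ∘ Sum.inl + ·) (zero_mulVec _) |>.trans (add_zero _)) i
    · exact congrArg (· + (B *ᵥ v ∘ Sum.inr) i) (mulVec_diagonal _ _ i)
  rw [rankOver, mulVecLin_coneMatrix, finrank_range_equiv_comp_comp_equiv]

variable {k} [FiniteDimensional k S]

lemma rankOver_coneMatrix_of_homotopy {A : Matrix l m S} {f : S} {B : Matrix m n S}
    {h : Matrix n m S} {h' : Matrix m l S} [Fintype l]
    (homotopy : B * h + h' * A = diagonal fun _ ↦ f) :
    rankOver k (coneMatrix A f B) = rankOver k A + rankOver k B := by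
  have map_ker_le : (LinearMap.ker (A.mulVecLin.restrictScalars k)).map
      (Algebra.lsmul k k (m → S) f) ≤ LinearMap.range (B.mulVecLin.restrictScalars k) := by
    rintro _ ⟨v, hv : A *ᵥ v = 0, rfl⟩
    refine ⟨h *ᵥ v, ?_⟩
    calc B *ᵥ h *ᵥ v = (B * h + h' * A) *ᵥ v := by
          rw [add_mulVec, ← mulVec_mulVec, ← mulVec_mulVec, hv, mulVec_zero, add_zero]
      _ = f • v := by
          rw [homotopy]
          ext i
          exact mulVec_diagonal _ v i
  rw [rankOver_coneMatrix_eq_finrank_range_mappingCone, finrank_range_mappingCone,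
    sup_eq_left.2 map_ker_le, rankOver, rankOver]

lemma two_mul_rankOver_coneMatrix [Finite l] {A : Matrix l m S} {f : S} {B : Matrix m n S}
    (hAB : A * B = 0) (δ : Derivation k S S) (hf : f * f = 0) (hδf : δ f = 1)
    (hδA : ∀ i j, δ (A i j) = 0) (hδB : ∀ i j, δ (B i j) = 0) :
    2 * rankOver k (coneMatrix A f B) =
      rankOver k A + rankOver k B + Fintype.card m * Module.finrank k S := by
  rw [rankOver_coneMatrix_eq_finrank_range_mappingCone,
    (isContraction_of_derivation δ hf hδf m).two_mul_finrank_range_mappingCone,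
    Module.finrank_pi_fintype, Finset.sum_const, Finset.card_univ, smul_eq_mul, rankOver, rankOver]
  · ext1 v
    simp [hAB]
  · intro v (hv : A *ᵥ v = 0)
    exact (mulVec_smul A f v).trans (by rw [hv, smul_zero])
  · intro v (hv : A *ᵥ v = 0)
    refine (derivation_mulVec δ hδA v).symm.trans ?_
    rw [hv]
    exact funext fun _ ↦ map_zero δ
  · rintro _ ⟨v, rfl⟩
    exact ⟨f • v, mulVec_smul B f v⟩
  · rintro _ ⟨v, rfl⟩
    exact ⟨δ ∘ v, (derivation_mulVec δ hδB v).symm⟩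

end MatrixRank

section Koszul

lemma diagonal_const_mul_add_mul_diagonal_const {R m n : Type*} [CommRing R] [CharP R 2]
    [Fintype m] [Fintype n] [DecidableEq m] [DecidableEq n] (f : R) (A : Matrix m n R) :
    (diagonal fun _ : m ↦ f) * A + A * (diagonal fun _ : n ↦ f) = 0 := by
  ext i j
  simp [mul_comm f, CharTwo.add_self_eq_zero]

variable {k S : Type*} [Field k] [CommRing S] [Algebra k S]

/-- The rank `n.choose p` of the degree-`p` term of the Koszul complex on `n` elements. Degrees are
integers so that `p - 1` is never truncated, and Pascal's rule holds by definition. -/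
def koszulCard : ℕ → ℤ → ℕ
  | 0, p => if p = 0 then 1 else 0
  | n + 1, p => koszulCard n (p - 1) + koszulCard n p

lemma koszulCard_of_neg (n : ℕ) {p : ℤ} (hp : p < 0) : koszulCard n p = 0 := by
  induction n generalizing p with
  | zero => exact if_neg hp.ne
  | succ n ih => rw [koszulCard, ih hp, ih (by lia)]

lemma koszulCard_zero (n : ℕ) : koszulCard n 0 = 1 := by
  induction n with
  | zero => rfl
  | succ n ih => rw [koszulCard, ih, koszulCard_of_neg n (by lia)]

instance (n : ℕ) : Unique (Fin (koszulCard n (1 - 1))) :=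
  (finCongr (koszulCard_zero n)).unique

/-- The basis of the degree-`p` term of the Koszul complex on `f :: l`, split into the basis
elements that contain `f`, which come first, and those that do not. -/
def koszulConsEquiv (f : S) (l : List S) (p : ℤ) :
    Fin (koszulCard l.length (p - 1)) ⊕ Fin (koszulCard l.length p) ≃
      Fin (koszulCard (f :: l).length p) :=
  finSumFinEquiv

/-- The signless boundary matrix from degree `p` to degree `p - 1` of the Koszul complex on `l`, in
the lexicographically ordered bases: the complex on `f :: l` is the cone of `f` on the complex
on `l`. -/
def koszulBoundary : (l : List S) → (p : ℤ) →
    Matrix (Fin (koszulCard l.length (p - 1))) (Fin (koszulCard l.length p)) S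
  | [], _ => 0
  | f :: l, p => (coneMatrix (koszulBoundary l (p - 1)) f (koszulBoundary l p)).reindex
      (koszulConsEquiv f l (p - 1)) (koszulConsEquiv f l p)

lemma span_range_koszulBoundary_one (l : List S) (i : Fin (koszulCard l.length (1 - 1))) :
    Ideal.span (Set.range (koszulBoundary l 1 i)) = Ideal.span {g | g ∈ l} := by
  induction l with
  | nil =>
    have : IsEmpty (Fin (koszulCard ([] : List S).length 1)) := inferInstanceAs (IsEmpty (Fin 0))
    simp [Set.range_eq_empty]
  | cons f l ih =>
    obtain ⟨i | i, rfl⟩ := (koszulConsEquiv f l (1 - 1)).surjective i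
    · exact (Fin.cast (koszulCard_of_neg l.length (by lia)) i).elim0
    · have row : koszulBoundary (f :: l) 1 (koszulConsEquiv f l (1 - 1) (Sum.inr i)) =
          Sum.elim (fun _ ↦ f) (koszulBoundary l 1 i) ∘ (koszulConsEquiv f l 1).symm := by
        ext j
        obtain ⟨j | j, rfl⟩ := (koszulConsEquiv f l 1).surjective j
        · simp [koszulBoundary, coneMatrix, Subsingleton.elim i j]
        · simp [koszulBoundary, coneMatrix]
      rw [row, EquivLike.range_comp, Set.Sum.elim_range, Set.range_const, Ideal.span_union, ih,
        ← Ideal.span_union]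
      congr 1
      ext g
      simp

lemma rankOver_koszulBoundary_one (l : List S) :
    rankOver k (koszulBoundary l 1) =
      Module.finrank k ((Ideal.span {g | g ∈ l}).restrictScalars k) := by
  rw [rankOver_of_unique, span_range_koszulBoundary_one]

lemma koszulBoundary_mul_koszulBoundary [CharP S 2] (l : List S) (p : ℤ) :
    koszulBoundary l (p - 1) * koszulBoundary l p = 0 := by
  induction l generalizing p with
  | nil => exact Matrix.zero_mul _
  | cons f l ih =>
    simp only [koszulBoundary, reindex_apply, submatrix_mul_equiv, coneMatrix,
      fromBlocks_multiply, ih, diagonal_const_mul_add_mul_diagonal_const, Matrix.mul_zero,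
      Matrix.zero_mul, add_zero, fromBlocks_zero, submatrix_zero, Pi.zero_apply]

lemma derivation_koszulBoundary (δ : Derivation k S S) {l : List S} (hδ : ∀ g ∈ l, δ g = 0)
    (p : ℤ) (i j) : δ (koszulBoundary l p i j) = 0 := by
  induction l generalizing p with
  | nil => exact map_zero δ
  | cons f l ih =>
    obtain ⟨hf, hl⟩ := List.forall_mem_cons.1 hδ
    obtain ⟨i, rfl⟩ := (koszulConsEquiv f l (p - 1)).surjective i
    obtain ⟨j, rfl⟩ := (koszulConsEquiv f l p).surjective j
    rcases i with i | i <;> rcases j with j | j <;>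
      simp [koszulBoundary, coneMatrix, ih hl, diagonal_apply, apply_ite δ, hf]

variable (k) in
/-- The elements of the list square to zero, and each has a derivation that maps it to `1` and kills
all later elements. -/
def HasDualDerivations : List S → Prop
  | [] => True
  | f :: l => (f * f = 0 ∧ ∃ δ : Derivation k S S, δ f = 1 ∧ ∀ g ∈ l, δ g = 0) ∧
      HasDualDerivations l

lemma two_mul_rankOver_koszulBoundary_cons [CharP S 2] [FiniteDimensional k S] {f : S} {l : List S}
    (hf : f * f = 0) (δ : Derivation k S S) (hδf : δ f = 1) (hδl : ∀ g ∈ l, δ g = 0) (p : ℤ) :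
    2 * rankOver k (koszulBoundary (f :: l) p) =
      rankOver k (koszulBoundary l (p - 1)) + rankOver k (koszulBoundary l p) +
        koszulCard l.length (p - 1) * Module.finrank k S := by
  rw [koszulBoundary, rankOver_reindex, two_mul_rankOver_coneMatrix
    (koszulBoundary_mul_koszulBoundary l p) δ hf hδf (derivation_koszulBoundary δ hδl (p - 1))
    (derivation_koszulBoundary δ hδl p), Fintype.card_fin]

theorem two_pow_mul_rankOver_koszulBoundary [CharP S 2] [FiniteDimensional k S] {f : S} {l : List S}
    (hl : HasDualDerivations k (f :: l)) (p : ℤ) :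
    2 ^ (l.length + 1) * rankOver k (koszulBoundary (f :: l) p) =
      (2 ^ (l.length + 1) - 1) * (koszulCard l.length (p - 1) * Module.finrank k S) := by
  induction l generalizing f p with
  | nil =>
    obtain ⟨⟨hf, δ, hδf, hδl⟩, -⟩ := hl
    have rank_nil (q : ℤ) : rankOver k (koszulBoundary ([] : List S) q) = 0 := rankOver_zero k
    simpa [rank_nil] using two_mul_rankOver_koszulBoundary_cons hf δ hδf hδl p
  | cons g l ih =>
    obtain ⟨⟨hf, δ, hδf, hδl⟩, hl⟩ := hl
    have step := two_mul_rankOver_koszulBoundary_cons hf δ hδf hδl p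
    have pascal : koszulCard (g :: l).length (p - 1) =
        koszulCard l.length (p - 1 - 1) + koszulCard l.length (p - 1) := rfl
    have ih₁ := ih hl (p - 1)
    have ih₂ := ih hl p
    have one_le (n : ℕ) : 1 ≤ 2 ^ n := Nat.one_le_two_pow
    have two_pow_succ : (2 : ℤ) ^ ((g :: l).length + 1) = 2 * 2 ^ (l.length + 1) := pow_succ' _ _
    zify [one_le] at ih₁ ih₂ step pascal ⊢
    rw [two_pow_succ]
    linear_combination 2 ^ (l.length + 1) * step + ih₁ + ih₂ -
      (2 ^ (l.length + 1) - 1) * Module.finrank k S * pascal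

/-- Multiplication by `a` on the Koszul complex on `l` is homotopic to zero. The homotopy `h p` goes
from degree `p - 1` to degree `p`. -/
def KoszulNullHomotopic (l : List S) (a : S) : Prop :=
  ∃ h : ∀ p, Matrix (Fin (koszulCard l.length p)) (Fin (koszulCard l.length (p - 1))) S,
    ∀ p, koszulBoundary l p * h p + h (p - 1) * koszulBoundary l (p - 1) = diagonal fun _ ↦ a

namespace KoszulNullHomotopic

variable {l : List S} {a b : S}

lemma zero : KoszulNullHomotopic l 0 :=
  ⟨0, fun p ↦ by simp⟩

lemma add (ha : KoszulNullHomotopic l a) (hb : KoszulNullHomotopic l b) :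
    KoszulNullHomotopic l (a + b) := by
  obtain ⟨h, hh⟩ := ha
  obtain ⟨h', hh'⟩ := hb
  refine ⟨h + h', fun p ↦ ?_⟩
  rw [← diagonal_add, ← hh p, ← hh' p]
  simp only [Pi.add_apply, Matrix.mul_add, Matrix.add_mul]
  abel

lemma mul_left (c : S) (ha : KoszulNullHomotopic l a) : KoszulNullHomotopic l (c * a) := by
  obtain ⟨h, hh⟩ := ha
  refine ⟨c • h, fun p ↦ ?_⟩
  have : (diagonal fun _ ↦ c * a) = c • diagonal fun _ : Fin (koszulCard l.length (p - 1)) ↦ a :=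
    diagonal_smul c fun _ ↦ a
  rw [this, ← hh p, smul_add]
  simp

variable [CharP S 2]

lemma head (f : S) (l : List S) : KoszulNullHomotopic (f :: l) f := by
  refine ⟨fun p ↦ (fromBlocks 0 1 0 0).reindex (koszulConsEquiv f l p)
    (koszulConsEquiv f l (p - 1)), fun p ↦ ?_⟩
  have double : koszulBoundary l (p - 1) + koszulBoundary l (p - 1) = 0 := by
    ext i j
    exact CharTwo.add_self_eq_zero _
  simp only [koszulBoundary, coneMatrix, reindex_apply, submatrix_mul_equiv, fromBlocks_multiply]
  rw [← Pi.add_apply, ← Pi.add_apply, ← submatrix_add]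
  simp [fromBlocks_add, double, fromBlocks_diagonal]

lemma cons (f : S) (ha : KoszulNullHomotopic l a) : KoszulNullHomotopic (f :: l) a := by
  obtain ⟨h, hh⟩ := ha
  refine ⟨fun p ↦ (fromBlocks (h (p - 1)) 0 0 (h p)).reindex (koszulConsEquiv f l p)
    (koszulConsEquiv f l (p - 1)), fun p ↦ ?_⟩
  simp only [koszulBoundary, coneMatrix, reindex_apply, submatrix_mul_equiv, fromBlocks_multiply]
  rw [← Pi.add_apply, ← Pi.add_apply, ← submatrix_add]
  simp [fromBlocks_add, diagonal_const_mul_add_mul_diagonal_const, fromBlocks_diagonal, hh]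

lemma of_mem (ha : a ∈ l) : KoszulNullHomotopic l a := by
  induction l with
  | nil => cases ha
  | cons f l ih =>
    rcases List.mem_cons.1 ha with rfl | ha
    · exact head a l
    · exact (ih ha).cons f

lemma of_mem_span (ha : a ∈ Ideal.span {g | g ∈ l}) : KoszulNullHomotopic l a :=
  Submodule.span_induction (fun _ ↦ of_mem) zero (fun _ _ _ _ ↦ add) (fun c _ _ ↦ mul_left c) ha

end KoszulNullHomotopic

lemma rankOver_koszulBoundary_cons_of_mem_span [CharP S 2] [FiniteDimensional k S] {f : S}
    {l : List S} (hf : f ∈ Ideal.span {g | g ∈ l}) (p : ℤ) :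
    rankOver k (koszulBoundary (f :: l) p) =
      rankOver k (koszulBoundary l (p - 1)) + rankOver k (koszulBoundary l p) := by
  obtain ⟨h, homotopy⟩ := KoszulNullHomotopic.of_mem_span hf
  rw [koszulBoundary, rankOver_reindex, rankOver_coneMatrix_of_homotopy (homotopy p)]

end Koszul

lemma derivation_mem_span {k R : Type*} [CommRing k] [CommRing R] [Algebra k R]
    (d : Derivation k R R) {s : Set R} (hd : ∀ r ∈ s, d r ∈ Ideal.span s) {a : R}
    (ha : a ∈ Ideal.span s) : d a ∈ Ideal.span s := by
  induction ha using Submodule.span_induction with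
  | mem r hr => exact hd r hr
  | zero => exact (map_zero d).symm ▸ zero_mem _
  | add r t _ _ hr ht => exact (map_add d r t).symm ▸ add_mem hr ht
  | smul c r hr hdr =>
    rw [smul_eq_mul, d.leibniz]
    exact add_mem (Ideal.mul_mem_left _ c hdr) (Ideal.mul_mem_right _ _ hr)

lemma one_add_mul_self_eq_zero {R : Type*} [CommRing R] [CharP R 2] {u : R} (hu : u * u = 1) :
    (1 + u) * (1 + u) = 0 := by
  linear_combination hu + (1 + u) * CharTwo.two_eq_zero (R := R)

lemma relIdeal_eq_span_range : relIdeal = Ideal.span (Set.range fun i : Fin 4 ↦ X i ^ 2 - 1) := by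
  rw [relIdeal]
  congr 1
  ext r
  simp [Fin.exists_fin_succ, eq_comm]

namespace Squot

/-- The class of the `i`-th variable, in the order `w, x, y, z`. -/
def var (i : Fin 4) : Squot := Ideal.Quotient.mk relIdeal (X i)

lemma var_mul_self (i : Fin 4) : var i * var i = 1 := by
  rw [← pow_two]
  refine Ideal.Quotient.eq.2 ?_
  rw [relIdeal_eq_span_range]
  exact Ideal.subset_span ⟨i, rfl⟩

lemma algHom_ext {A : Type*} [Semiring A] [Algebra (ZMod 2) A] {φ ψ : Squot →ₐ[ZMod 2] A}
    (h : ∀ i, φ (var i) = ψ (var i)) : φ = ψ :=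
  Ideal.Quotient.algHom_ext _ (MvPolynomial.algHom_ext h)

/-- The algebra map `S → 𝔽₂` sending every variable to `1`. -/
def augmentation : Squot →ₐ[ZMod 2] ZMod 2 :=
  Ideal.Quotient.liftₐ relIdeal (aeval 1) fun a ha ↦ by
    rw [← RingHom.mem_ker]
    refine (?_ : relIdeal ≤ RingHom.ker (aeval 1)) ha
    rw [relIdeal_eq_span_range, Ideal.span_le]
    rintro _ ⟨i, rfl⟩
    simp

lemma augmentation_var (i : Fin 4) : augmentation (var i) = 1 :=
  (Ideal.Quotient.lift_mk _ _ _).trans (aeval_X _ i)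

instance : Nontrivial Squot := augmentation.toRingHom.domain_nontrivial

instance : CharP Squot 2 := charP_of_injective_algebraMap' (ZMod 2) 2

lemma adjoin_range_var : Algebra.adjoin (ZMod 2) (Set.range var) = ⊤ := by
  have range_var : Set.range var = Ideal.Quotient.mkₐ (ZMod 2) relIdeal '' Set.range X :=
    Set.range_comp _ _
  rw [range_var, ← AlgHom.map_adjoin, adjoin_range_X, Algebra.map_top]
  exact (AlgHom.range_eq_top _).2 (Ideal.Quotient.mkₐ_surjective _ _)

instance : Module.Finite (ZMod 2) Squot := by
  have isIntegral_var (i : Fin 4) : IsIntegral (ZMod 2) (var i) :=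
    .of_pow two_pos (by rw [pow_two, var_mul_self]; exact isIntegral_one)
  rw [Module.finite_def, ← Algebra.top_toSubmodule, ← adjoin_range_var]
  exact fg_adjoin_of_finite (Set.finite_range var) (Set.forall_mem_range.2 isIntegral_var)

lemma mk_pderiv_eq_zero (i : Fin 4) (a : MvPolynomial (Fin 4) (ZMod 2))
    (ha : Ideal.Quotient.mkₐ (ZMod 2) relIdeal a = 0) :
    Ideal.Quotient.mkₐ (ZMod 2) relIdeal (pderiv i a) = 0 := by
  replace ha : a ∈ relIdeal := Ideal.Quotient.eq_zero_iff_mem.1 ha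
  refine Ideal.Quotient.eq_zero_iff_mem.2 ?_
  rw [relIdeal_eq_span_range] at ha ⊢
  refine derivation_mem_span _ ?_ ha
  rintro _ ⟨j, rfl⟩
  simp [CharTwo.two_eq_zero]

/-- The derivation of `S` induced by the partial derivative in the `i`-th variable. -/
def partialDeriv (i : Fin 4) : Derivation (ZMod 2) Squot Squot :=
  Derivation.liftOfSurjective (Ideal.Quotient.mkₐ_surjective _ _) (mk_pderiv_eq_zero i)

lemma partialDeriv_var (i j : Fin 4) : partialDeriv i (var j) = if j = i then 1 else 0 := by
  refine (Derivation.liftOfSurjective_apply _ (mk_pderiv_eq_zero i) (X j)).trans ?_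
  rw [pderiv_X, Pi.single_apply, apply_ite (Ideal.Quotient.mkₐ _ _), map_one, map_zero]

lemma ker_augmentation_eq_span :
    RingHom.ker augmentation =
      Ideal.span {g | g ∈ [1 + var 0, 1 + var 1, 1 + var 2, 1 + var 3]} := by
  set J := Ideal.span {g | g ∈ [1 + var 0, 1 + var 1, 1 + var 2, 1 + var 3]} with hJ
  have one_add_var_mem (i : Fin 4) : 1 + var i ∈ J :=
    Ideal.subset_span (by fin_cases i <;> simp)
  apply le_antisymm
  · intro s (hs : augmentation s = 0)
    have mk_eq : Ideal.Quotient.mkₐ (ZMod 2) J = (Algebra.ofId (ZMod 2) _).comp augmentation := by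
      refine algHom_ext fun i ↦ ?_
      rw [AlgHom.comp_apply, augmentation_var, map_one, eq_comm]
      exact Ideal.Quotient.eq.2 (CharTwo.sub_eq_add 1 (var i) ▸ one_add_var_mem i)
    refine Ideal.Quotient.eq_zero_iff_mem.1 ((DFunLike.congr_fun mk_eq s).trans ?_)
    rw [AlgHom.comp_apply, hs, map_zero]
  · rw [hJ, Ideal.span_le]
    intro s hs
    have hs : s ∈ [1 + var 0, 1 + var 1, 1 + var 2, 1 + var 3] := hs
    fin_cases hs <;> simp [augmentation_var, CharTwo.add_self_eq_zero]

lemma finrank_ker_augmentation_add_one :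
    Module.finrank (ZMod 2) (LinearMap.ker augmentation.toLinearMap) + 1 =
      Module.finrank (ZMod 2) Squot := by
  have surjective : Function.Surjective augmentation := fun a ↦
    ⟨algebraMap _ _ a, augmentation.commutes a⟩
  rw [← augmentation.toLinearMap.finrank_range_add_finrank_ker, LinearMap.range_eq_top.2 surjective,
    finrank_top, Module.finrank_self, add_comm]

lemma hasDualDerivations_one_add_var :
    HasDualDerivations (ZMod 2) [1 + var 0, 1 + var 1, 1 + var 2, 1 + var 3] := by
  refine ⟨⟨?_, partialDeriv 0, ?_⟩, ⟨?_, partialDeriv 1, ?_⟩, ⟨?_, partialDeriv 2, ?_⟩,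
    ⟨?_, partialDeriv 3, ?_⟩, trivial⟩ <;>
  simp [one_add_mul_self_eq_zero, var_mul_self, partialDeriv_var]

theorem finrank_eq : Module.finrank (ZMod 2) Squot = 16 := by
  have rank_boundary_one := two_pow_mul_rankOver_koszulBoundary hasDualDerivations_one_add_var 1
  rw [rankOver_koszulBoundary_one, ← ker_augmentation_eq_span] at rank_boundary_one
  replace rank_boundary_one :
      16 * Module.finrank (ZMod 2) (LinearMap.ker augmentation.toLinearMap) =
        15 * (1 * Module.finrank (ZMod 2) Squot) := rank_boundary_one
  have codim_one := finrank_ker_augmentation_add_one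
  lia

end Squot

lemma Fq_mem_span : Fq ∈ Ideal.span {g | g ∈ [Gq, Hq, Iq]} := by
  have Fq_eq : Fq = Gq + xq * yq * Hq + xq * yq * (yq * zq) * Iq := by
    have hy : yq * yq = 1 := Squot.var_mul_self 2
    have hz : zq * zq = 1 := Squot.var_mul_self 3
    have htwo : (2 : Squot) = 0 := CharTwo.two_eq_zero
    rw [Fq, Gq, Hq, Iq]
    linear_combination -(wq * xq * (zq * zq)) * hy - wq * xq * hz -
      (xq * yq + xq * yq * (yq * zq)) * htwo
  rw [Fq_eq]
  exact add_mem (add_mem (Ideal.subset_span (by simp))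
    (Ideal.mul_mem_left _ _ (Ideal.subset_span (by simp))))
    (Ideal.mul_mem_left _ _ (Ideal.subset_span (by simp)))

lemma hasDualDerivations_Gq_Hq_Iq : HasDualDerivations (ZMod 2) [Gq, Hq, Iq] := by
  have hw : wq = Squot.var 0 := rfl
  have hx : xq = Squot.var 1 := rfl
  have hy : yq = Squot.var 2 := rfl
  have hz : zq = Squot.var 3 := rfl
  have mul_mul_self (i j : Fin 4) :
      Squot.var i * Squot.var j * (Squot.var i * Squot.var j) = 1 := by
    rw [mul_mul_mul_comm, Squot.var_mul_self, Squot.var_mul_self, mul_one]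
  refine ⟨⟨one_add_mul_self_eq_zero (mul_mul_self 1 2), yq • Squot.partialDeriv 1, ?_⟩,
    ⟨one_add_mul_self_eq_zero (mul_mul_self 2 3), zq • Squot.partialDeriv 2, ?_⟩,
    ⟨one_add_mul_self_eq_zero (mul_mul_self 0 3), zq • Squot.partialDeriv 0, ?_⟩, trivial⟩ <;>
  simp [Gq, Hq, Iq, hw, hx, hy, hz, Squot.partialDeriv_var, Squot.var_mul_self]

lemma koszulBoundary_two_eq_D2 : koszulBoundary [Fq, Gq, Hq, Iq] 2 = D2 := by
  ext i j
  fin_cases i <;> fin_cases j <;> rfl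

lemma koszulBoundary_three_eq_D3 : koszulBoundary [Fq, Gq, Hq, Iq] 3 = D3 := by
  ext i j
  fin_cases i <;> fin_cases j <;> rfl

lemma rankOver_koszulBoundary_Gq_Hq_Iq (p : ℤ) :
    rankOver (ZMod 2) (koszulBoundary [Gq, Hq, Iq] p) = 14 * koszulCard 2 (p - 1) := by
  have rank : 8 * rankOver (ZMod 2) (koszulBoundary [Gq, Hq, Iq] p) =
      7 * (koszulCard 2 (p - 1) * Module.finrank (ZMod 2) Squot) :=
    two_pow_mul_rankOver_koszulBoundary hasDualDerivations_Gq_Hq_Iq p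
  rw [Squot.finrank_eq] at rank
  lia

lemma rankOver_koszulBoundary_Fq_Gq_Hq_Iq (p : ℤ) :
    rankOver (ZMod 2) (koszulBoundary [Fq, Gq, Hq, Iq] p) = 14 * koszulCard 3 (p - 1) := by
  rw [rankOver_koszulBoundary_cons_of_mem_span Fq_mem_span, rankOver_koszulBoundary_Gq_Hq_Iq,
    rankOver_koszulBoundary_Gq_Hq_Iq, ← mul_add]
  rfl

/-- With `S = 𝔽₂[w,x,y,z]/⟨w²−1, x²−1, y²−1, z²−1⟩` (16-dimensional over `𝔽₂`)
and `F = 1+wx`, `G = 1+xy`, `H = 1+yz`, `I = 1+wz`, the `𝔽₂`-linear maps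
`d₂ : S⁶ → S⁴` and `d₃ : S⁴ → S⁶` given by the Koszul block matrices `D₂`,
`D₃` (between spaces of dimensions 96 and 64) satisfy `d₂ ∘ d₃ = 0` and
`dim ker d₂ − dim im d₃ = 12`: this multivariate multicycle code encodes
`k = 12` logical qubits in `n = 96` physical qubits. -/
theorem mm_code_96_12 :
    Module.finrank (ZMod 2) Squot = 16 ∧
    Module.finrank (ZMod 2) (Fin 6 → Squot) = 96 ∧
    Module.finrank (ZMod 2) (Fin 4 → Squot) = 64 ∧
    (D2.mulVecLin.restrictScalars (ZMod 2)) ∘ₗ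
      (D3.mulVecLin.restrictScalars (ZMod 2)) = 0 ∧
    Module.finrank (ZMod 2)
        (LinearMap.ker (D2.mulVecLin.restrictScalars (ZMod 2))) -
      Module.finrank (ZMod 2)
        (LinearMap.range (D3.mulVecLin.restrictScalars (ZMod 2))) = 12 := by
  have finrank_pi (n : ℕ) : Module.finrank (ZMod 2) (Fin n → Squot) = n * 16 := by
    simp [Module.finrank_pi_fintype, Squot.finrank_eq]
  have D2_mul_D3 : D2 * D3 = 0 := by
    rw [← koszulBoundary_two_eq_D2, ← koszulBoundary_three_eq_D3]
    exact koszulBoundary_mul_koszulBoundary [Fq, Gq, Hq, Iq] 3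
  have rank_D2 : rankOver (ZMod 2) D2 = 42 :=
    koszulBoundary_two_eq_D2 ▸ rankOver_koszulBoundary_Fq_Gq_Hq_Iq 2
  have rank_D3 : rankOver (ZMod 2) D3 = 42 :=
    koszulBoundary_three_eq_D3 ▸ rankOver_koszulBoundary_Fq_Gq_Hq_Iq 3
  have rank_nullity := (D2.mulVecLin.restrictScalars (ZMod 2)).finrank_range_add_finrank_ker
  refine ⟨Squot.finrank_eq, finrank_pi 6, finrank_pi 4,
    LinearMap.ext fun v ↦ by simp [D2_mul_D3], ?_⟩
  rw [finrank_pi] at rank_nullity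
  rw [rankOver] at rank_D2 rank_D3
  lia

end
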